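/- Let Γ be a non-elementary hyperbolic group and μ a symmetric probability measure on Γ with a finite exponential moment, i.e. E[exp(λ d_w(e,Z₁))] < ∞ for some λ > 0 and a word metric d_w. Then there exist positive constants C₁ and c₁ such that G(e,γ) ≤ C₁ e^{−c₁ d_w(e,γ)} for all γ ∈ Γ. -/

import Mathlib

open Filter MeasureTheory Topology Metric Set
open scoped ENNReal

noncomputable section

namespace GHM

/-! ### Coarse geometry of distance functions -/

/-- The Gromov product `(x|y)_w` of `x` and `y` seen from `w`, for a distance function `d`. -/
def gromov {X : Type*} (d : X → X → ℝ) (w x y : X) : ℝ :=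
  (d x w + d y w - d x y) / 2

/-- `d` is `δ`-hyperbolic (four point condition on Gromov products). -/
def IsHyperbolicWith {X : Type*} (d : X → X → ℝ) (δ : ℝ) : Prop :=
  ∀ w x y z : X, min (gromov d w x y) (gromov d w x z) - δ ≤ gromov d w y z

/-- `d` is Gromov hyperbolic. -/
def IsHyperbolic {X : Type*} (d : X → X → ℝ) : Prop :=
  ∃ δ : ℝ, 0 ≤ δ ∧ IsHyperbolicWith d δ

/-- `d` is a genuine metric. -/
structure IsMetricFun {X : Type*} (d : X → X → ℝ) : Prop where
  refl : ∀ x, d x x = 0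
  pos : ∀ x y, x ≠ y → 0 < d x y
  symm : ∀ x y, d x y = d y x
  triangle : ∀ x y z, d x z ≤ d x y + d y z

/-- `f` is a `(Λ,c)`-quasi-isometric embedding from `(X,dX)` to `(Y,dY)`. -/
def QIEmbed {X Y : Type*} (dX : X → X → ℝ) (dY : Y → Y → ℝ)
    (f : X → Y) (Λ c : ℝ) : Prop :=
  ∀ x x' : X, dX x x' / Λ - c ≤ dY (f x) (f x') ∧ dY (f x) (f x') ≤ Λ * dX x x' + c

/-- `(X,dX)` and `(Y,dY)` are quasi-isometric. -/
def QuasiIsometric {X Y : Type*} (dX : X → X → ℝ) (dY : Y → Y → ℝ) : Prop :=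
  ∃ (f : X → Y) (Λ c C : ℝ), 1 ≤ Λ ∧ 0 ≤ c ∧ 0 ≤ C ∧
    QIEmbed dX dY f Λ c ∧ ∀ y : Y, ∃ x : X, dY (f x) y ≤ C

variable {G : Type*} [Group G]

/-- Word length of `g` with respect to the (symmetrized) finite set `S`. -/
def wordLength (S : Finset G) (g : G) : ℕ :=
  sInf {n : ℕ | ∃ l : List G, l.length = n ∧ (∀ a ∈ l, a ∈ S ∨ a⁻¹ ∈ S) ∧ l.prod = g}

/-- The word metric associated with a finite generating set `S`. -/
def wordDist (S : Finset G) (x y : G) : ℝ := wordLength S (x⁻¹ * y)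

/-- `S` generates the group. -/
def Generates (S : Finset G) : Prop := Subgroup.closure (S : Set G) = ⊤

/-- The standard metric on `ℤ`. -/
def intDist (m n : ℤ) : ℝ := |(m : ℝ) - (n : ℝ)|

/-- `G` is a non-elementary hyperbolic group: finitely generated, its word metrics are
Gromov hyperbolic, it is infinite, and it is not quasi-isometric to `ℤ`. -/
def NonElemHyperbolic (G : Type*) [Group G] : Prop :=
  Infinite G ∧ (∃ S : Finset G, Generates S) ∧
    ∀ S : Finset G, Generates S →
      IsHyperbolic (wordDist S) ∧ ¬ QuasiIsometric (wordDist S) intDist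

/-- `d` is invariant under left translations. -/
def LeftInvariant (d : G → G → ℝ) : Prop := ∀ g x y : G, d (g * x) (g * y) = d x y

/-- `d` belongs to the class `𝒟(Γ)`: it is a left-invariant Gromov hyperbolic metric on the
group, quasi-isometric to a word metric of a finite generating set. -/
def MemD (d : G → G → ℝ) : Prop :=
  IsMetricFun d ∧ LeftInvariant d ∧ IsHyperbolic d ∧
    ∃ S : Finset G, Generates S ∧ QuasiIsometric d (wordDist S)

/-! ### Random walks -/

/-- `μ` is (the density of) a probability measure on the (countable) group. -/
def IsProbDensity (μ : G → ℝ) : Prop := (∀ g, 0 ≤ μ g) ∧ HasSum μ 1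

/-- `μ` is symmetric. -/
def IsSymmetric (μ : G → ℝ) : Prop := ∀ g : G, μ g⁻¹ = μ g

/-- The support of `μ` generates `G`. -/
def GeneratesSupp (μ : G → ℝ) : Prop := Subgroup.closure {g : G | μ g ≠ 0} = ⊤

open scoped Classical in
/-- Convolution powers `μ^n` of `μ`. -/
def convPow (μ : G → ℝ) : ℕ → G → ℝ
  | 0 => fun g => if g = 1 then 1 else 0
  | n + 1 => fun g => ∑' y : G, convPow μ n y * μ (y⁻¹ * g)

/-- The Green function `G(x,y) = ∑_n μ^n(x⁻¹y)`. -/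
def greenFn (μ : G → ℝ) (x y : G) : ℝ := ∑' n : ℕ, convPow μ n (x⁻¹ * y)

/-- The random walk is transient, i.e. `G(e,e) = ∑_n μ^n(e) < ∞`. -/
def Transient (μ : G → ℝ) : Prop := Summable fun n : ℕ => convPow μ n (1 : G)

/-- Successive positions of a walk started at `x` with increments `l`. -/
def walkPositions (x : G) (l : List G) : List G := l.scanl (fun p a => p * a) x

/-- The increments `l` describe a trajectory from `x` which hits `y` for the first time at
its final position. -/
def IsFirstHitPath (x y : G) (l : List G) : Prop :=
  (walkPositions x l).getLast? = some y ∧ y ∉ (walkPositions x l).dropLast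

/-- `F(x,y)`: the probability that the `μ`-random walk started at `x` ever hits `y`. -/
def hitProb (μ : G → ℝ) (x y : G) : ℝ :=
  ∑' l : {l : List G // IsFirstHitPath x y l}, ((l : List G).map μ).prod

/-- The Green metric `d_G(x,y) = - log F(x,y)`. -/
def greenDist (μ : G → ℝ) (x y : G) : ℝ := - Real.log (hitProb μ x y)

/-- `μ` has a finite first moment with respect to `d`. -/
def FiniteFirstMoment (d : G → G → ℝ) (μ : G → ℝ) : Prop :=
  Summable fun g : G => d 1 g * μ g

/-- `μ` has an exponential moment with respect to `d`. -/
def HasExpMoment (d : G → G → ℝ) (μ : G → ℝ) : Prop :=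
  ∃ lam : ℝ, 0 < lam ∧ Summable fun g : G => Real.exp (lam * d 1 g) * μ g

/-- The entropy `H(μ^n) = -∑_γ μ^n(γ) log μ^n(γ)` of the `n`-th convolution power. -/
def entropyAt (μ : G → ℝ) (n : ℕ) : ℝ :=
  - ∑' g : G, convPow μ n g * Real.log (convPow μ n g)

/-- `h` is the asymptotic entropy of the walk. -/
def HasEntropy (μ : G → ℝ) (h : ℝ) : Prop :=
  Tendsto (fun n : ℕ => entropyAt μ n / n) atTop (𝓝 h)

/-- `v` is the logarithmic volume growth of `(G,d)` (seen from the identity). -/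
def HasGrowth (d : G → G → ℝ) (v : ℝ) : Prop :=
  Filter.limsup (fun R : ℝ => Real.log (Nat.card {g : G // d 1 g ≤ R}) / R) atTop = v

/-- The position `Z_n = ω_0 ω_1 ⋯ ω_{n-1}` of the random walk at time `n`, given the
sequence of increments `ω`. -/
def walkPos (n : ℕ) (ω : ℕ → G) : G := ((List.range n).map ω).prod

/-- `P` is the law on the space of increment sequences of an i.i.d. sequence of law `μ`:
cylinders have product measure.  (This characterizes the path measure of the random walk.) -/
def IsWalkMeasure [MeasurableSpace G] (μ : G → ℝ) (P : Measure (ℕ → G)) : Prop :=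
  IsProbabilityMeasure P ∧
    ∀ (n : ℕ) (g : Fin n → G),
      P {ω : ℕ → G | ∀ i : Fin n, ω (i : ℕ) = g i} = ∏ i : Fin n, ENNReal.ofReal (μ (g i))

/-! ### The Gromov boundary, visual metrics, harmonic and quasiconformal measures -/

/-- A sequence tends to infinity if Gromov products (at the base point `1`) go to `∞`. -/
def TendstoInfinity (d : G → G → ℝ) (u : ℕ → G) : Prop :=
  Tendsto (fun p : ℕ × ℕ => gromov d 1 (u p.1) (u p.2)) atTop atTop

/-- A realization of the Gromov boundary of `(G,d)` as an abstract type `B`: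
`conv u b` means that the sequence `u` converges at infinity to the boundary point `b`.
The group acts on its boundary by `smul`. -/
structure BoundaryData (G : Type*) [Group G] (d : G → G → ℝ) (B : Type*) where
  conv : (ℕ → G) → B → Prop
  smul : G → B → B
  conv_unique : ∀ u b b', conv u b → conv u b' → b = b'
  exists_conv : ∀ u, TendstoInfinity d u → ∃ b, conv u b
  conv_tendstoInfinity : ∀ u b, conv u b → TendstoInfinity d u
  conv_iff : ∀ u v b, conv u b →
    (conv v b ↔ Tendsto (fun n => gromov d 1 (u n) (v n)) atTop atTop)
  conv_surj : ∀ b, ∃ u, conv u b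
  smul_conv : ∀ (γ : G) (u) (b), conv u b → conv (fun n => γ * u n) (smul γ b)

/-- Asymptotic Gromov product of two sequences. -/
def seqGromov (d : G → G → ℝ) (u v : ℕ → G) : ℝ :=
  Filter.liminf (fun n => gromov d 1 (u n) (v n)) atTop

/-- The metric of `B` is a visual metric of parameter `ε` (with comparison constant `C`)
for the hyperbolic distance `d` on the group:  `dist(a,b) ≍ exp(-ε (a|b))`. -/
def IsVisualMetric {B : Type*} [MetricSpace B] (d : G → G → ℝ)
    (bd : BoundaryData G d B) (ε C : ℝ) : Prop :=
  0 < ε ∧ 0 < C ∧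
    ∀ u v b b', bd.conv u b → bd.conv v b' → b ≠ b' →
      dist b b' ≤ C * Real.exp (-ε * seqGromov d u v) ∧
      Real.exp (-ε * seqGromov d u v) ≤ C * dist b b'

/-- `ν` is the harmonic measure of the random walk of law `μ` on the boundary `B`:
it is the law of the almost sure limit `Z_∞` of the walk on the boundary. -/
def IsHarmonicMeasure {B : Type*} [MeasurableSpace G] [MeasurableSpace B]
    (d : G → G → ℝ) (bd : BoundaryData G d B) (μ : G → ℝ)
    (P : Measure (ℕ → G)) (ν : Measure B) : Prop :=
  IsWalkMeasure μ P ∧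
    ∃ Zinf : (ℕ → G) → B, Measurable Zinf ∧
      (∀ᵐ ω ∂P, bd.conv (fun n => walkPos n ω) (Zinf ω)) ∧ ν = P.map Zinf

/-- Busemann function `β_b(x,y)` of the boundary point `b`. -/
def busemann {B : Type*} (d : G → G → ℝ) (bd : BoundaryData G d B)
    (x y : G) (b : B) : ℝ :=
  sSup {t : ℝ | ∃ u, bd.conv u b ∧
    t = Filter.limsup (fun n => d x (u n) - d y (u n)) atTop}

/-- The image measure `γ^*ρ`, `γ^*ρ(A) = ρ(γA)`. -/
def actPush {B : Type*} [MeasurableSpace B] {d : G → G → ℝ}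
    (bd : BoundaryData G d B) (γ : G) (ρ : Measure B) : Measure B :=
  ρ.map (bd.smul γ⁻¹)

/-- `ρ` is a quasiconformal measure on the boundary for `(G,d)` of logarithmic growth
parameter `v`: `γ^*ρ` and `ρ` are mutually absolutely continuous, with density
`dγ^*ρ/dρ ≍ exp (v β_b(1,γ⁻¹))` (uniformly in `γ`). -/
def IsQuasiconformalMeasure {B : Type*} [MeasurableSpace B] {d : G → G → ℝ}
    (bd : BoundaryData G d B) (ρ : Measure B) (v : ℝ) : Prop :=
  ∃ C : ℝ, 0 < C ∧ ∀ γ : G,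
    actPush bd γ ρ ≪ ρ ∧ ρ ≪ actPush bd γ ρ ∧
      ∀ᵐ b ∂ρ,
        (actPush bd γ ρ).rnDeriv ρ b
            ≤ ENNReal.ofReal (C * Real.exp (v * busemann d bd 1 γ⁻¹ b)) ∧
        ENNReal.ofReal (C⁻¹ * Real.exp (v * busemann d bd 1 γ⁻¹ b))
            ≤ (actPush bd γ ρ).rnDeriv ρ b

/-- `ν` is Ahlfors regular of dimension `α`: `ν(B(b,r)) ≍ r^α`. -/
def AhlforsRegularOfDim {B : Type*} [MetricSpace B] [MeasurableSpace B]
    (ν : Measure B) (α : ℝ) : Prop :=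
  ∃ C : ℝ, 0 < C ∧ ∀ (b : B) (r : ℝ), 0 < r → r ≤ Metric.diam (Set.univ : Set B) →
    ENNReal.ofReal (C⁻¹ * r ^ α) ≤ ν (Metric.ball b r) ∧
      ν (Metric.ball b r) ≤ ENNReal.ofReal (C * r ^ α)

/-- The Hausdorff dimension of a measure: the infimum of the Hausdorff dimensions of sets of
full measure. -/
def measureDim {B : Type*} [EMetricSpace B] [MeasurableSpace B] (ν : Measure B) : ℝ≥0∞ :=
  ⨅ (A : Set B) (_ : ν Aᶜ = 0), dimH A

/-! ### Word geodesics -/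

/-- `p 0, …, p n` is a geodesic segment for the word metric of `S`. -/
def IsWordGeodesic (S : Finset G) (n : ℕ) (p : ℕ → G) : Prop :=
  ∀ i j : ℕ, i ≤ n → j ≤ n → wordDist S (p i) (p j) = |(i : ℝ) - (j : ℝ)|

/-- `v` lies within distance `r` of some word geodesic segment from `x` to `y`. -/
def NearWordGeodesic (S : Finset G) (x y v : G) (r : ℝ) : Prop :=
  ∃ (n : ℕ) (p : ℕ → G), IsWordGeodesic S n p ∧ p 0 = x ∧ p n = y ∧
    ∃ i ≤ n, wordDist S v (p i) ≤ r

/-! ### Martin boundary -/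

/-- The Martin kernel `K(x,y) = G(x,y)/G(e,y)`. -/
def martinKernel (μ : G → ℝ) (x y : G) : ℝ := greenFn μ x y / greenFn μ 1 y

/-- The embedding `y ↦ K(·,y)` of the group in `C(G)` (pointwise topology). -/
def martinMap (μ : G → ℝ) (y : G) : G → ℝ := fun x => martinKernel μ x y

/-- The Martin boundary: the boundary of the image of the group under the Martin embedding
in the space of functions with the topology of pointwise convergence. -/
def martinBoundary (μ : G → ℝ) : Set (G → ℝ) :=
  closure (Set.range (martinMap μ)) \ Set.range (martinMap μ)

/-- `h` is a `μ`-harmonic function. -/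
def IsHarmonicFn (μ : G → ℝ) (h : G → ℝ) : Prop :=
  ∀ x : G, h x = ∑' y : G, h y * μ (x⁻¹ * y)

/-- `h` is a minimal positive harmonic function. -/
def IsMinimalHarmonic (μ : G → ℝ) (h : G → ℝ) : Prop :=
  IsHarmonicFn μ h ∧ (∀ x, 0 < h x) ∧
    ∀ u : G → ℝ, IsHarmonicFn μ u → (∀ x, 0 ≤ u x) → (∀ x, u x ≤ h x) →
      ∃ c : ℝ, u = fun x => c * h x

/-! ### Metric space versions (geodesic and quasiruled spaces) -/

/-- A geodesic metric space. -/
def IsGeodesicSpace (X : Type*) [MetricSpace X] : Prop :=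
  ∀ x y : X, ∃ f : ℝ → X, f 0 = x ∧ f (dist x y) = y ∧
    ∀ s ∈ Set.Icc (0:ℝ) (dist x y), ∀ t ∈ Set.Icc (0:ℝ) (dist x y),
      dist (f s) (f t) = |s - t|

/-- `f : [a,b] → Y` is a `(Λ,c)`-quasigeodesic segment. -/
def IsQuasigeodesicOn {Y : Type*} [MetricSpace Y] (f : ℝ → Y) (a b Λ c : ℝ) : Prop :=
  ∀ s ∈ Set.Icc a b, ∀ t ∈ Set.Icc a b,
    |s - t| / Λ - c ≤ dist (f s) (f t) ∧ dist (f s) (f t) ≤ Λ * |s - t| + c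

/-- `f : [a,b] → Y` is a `τ`-quasiruler: Gromov products of triples along it are `≤ τ`. -/
def IsQuasirulerOn {Y : Type*} [MetricSpace Y] (f : ℝ → Y) (a b τ : ℝ) : Prop :=
  ∀ s t u : ℝ, s ∈ Set.Icc a b → t ∈ Set.Icc a b → u ∈ Set.Icc a b → s ≤ t → t ≤ u →
    dist (f s) (f t) + dist (f t) (f u) ≤ dist (f s) (f u) + 2 * τ

/-- A quasiruled metric space: for some constants `(Λ,c,τ)` every pair of points is joined
by a `(Λ,c)`-quasigeodesic, and every `(Λ,c)`-quasigeodesic is a `τ`-quasiruler. -/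
def Quasiruled (Y : Type*) [MetricSpace Y] : Prop :=
  ∃ Λ c τ : ℝ, 1 ≤ Λ ∧ 0 ≤ c ∧ 0 ≤ τ ∧
    (∀ x y : Y, ∃ (a b : ℝ) (f : ℝ → Y), a ≤ b ∧ f a = x ∧ f b = y ∧
      IsQuasigeodesicOn f a b Λ c) ∧
    ∀ (f : ℝ → Y) (a b : ℝ), IsQuasigeodesicOn f a b Λ c → IsQuasirulerOn f a b τ

/-- A metric space is hyperbolic. -/
def HypSpace (Y : Type*) [MetricSpace Y] : Prop :=
  IsHyperbolic (fun x y : Y => dist x y)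

/-- `f` is a quasi-isometry between metric spaces. -/
def MetricQI {X Y : Type*} [MetricSpace X] [MetricSpace Y] (f : X → Y) : Prop :=
  ∃ Λ c C : ℝ, 1 ≤ Λ ∧ 0 ≤ c ∧ 0 ≤ C ∧
    QIEmbed (fun a b : X => dist a b) (fun a b : Y => dist a b) f Λ c ∧
    ∀ y : Y, ∃ x : X, dist (f x) y ≤ C



section Word
variable {S : Finset G}

lemma wl_exists (hS : Generates S) (g : G) : ∃ l : List G, l.length = wordLength S g ∧
    (∀ a ∈ l, a ∈ S ∨ a⁻¹ ∈ S) ∧ l.prod = g := by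
  have hne : {n : ℕ | ∃ l : List G, l.length = n ∧ (∀ a ∈ l, a ∈ S ∨ a⁻¹ ∈ S) ∧ l.prod = g}.Nonempty := by
    have hg : g ∈ Subgroup.closure (S : Set G) := by
      rw [show Subgroup.closure (S : Set G) = ⊤ from hS]; trivial
    rw [← Subgroup.mem_toSubmonoid, Subgroup.closure_toSubmonoid] at hg
    obtain ⟨l, h1, h2⟩ := Submonoid.exists_list_of_mem_closure hg
    exact ⟨l.length, l, rfl, by simpa using h1, h2⟩
  exact Nat.sInf_mem hne

lemma wl_le {l : List G} (h : ∀ a ∈ l, a ∈ S ∨ a⁻¹ ∈ S) : wordLength S l.prod ≤ l.length :=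
  Nat.sInf_le ⟨l, rfl, h, rfl⟩

lemma wl_one : wordLength S (1 : G) = 0 := by
  have := wl_le (S := S) (l := ([] : List G)) (by simp)
  simpa using this

lemma wl_mul (hS : Generates S) (g h : G) :
    wordLength S (g * h) ≤ wordLength S g + wordLength S h := by
  obtain ⟨l, h1, h2, h3⟩ := wl_exists hS g
  obtain ⟨l', h1', h2', h3'⟩ := wl_exists hS h
  rw [← h1, ← h1', ← List.length_append]
  conv_lhs => rw [← h3, ← h3', ← List.prod_append]
  apply wl_le
  intro a ha
  rcases List.mem_append.1 ha with h | h
  · exact h2 a h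
  · exact h2' a h

lemma wl_inv_le (hS : Generates S) (g : G) : wordLength S g⁻¹ ≤ wordLength S g := by
  obtain ⟨l, h1, h2, h3⟩ := wl_exists hS g
  have : g⁻¹ = ((l.map fun x => x⁻¹).reverse).prod := by
    rw [← h3, List.prod_inv_reverse]
  rw [this, ← h1]
  refine (wl_le ?_).trans (by simp)
  intro a ha
  simp only [List.mem_reverse, List.mem_map] at ha
  obtain ⟨b, hb, rfl⟩ := ha
  rcases h2 b hb with h | h
  · right; simpa using h
  · left; exact h

lemma wl_inv (hS : Generates S) (g : G) : wordLength S g⁻¹ = wordLength S g :=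
  le_antisymm (wl_inv_le hS g) (by simpa using wl_inv_le hS g⁻¹)

lemma wl_split (hS : Generates S) (g : G) (i : ℕ) (hi : i ≤ wordLength S g) :
    ∃ a : G, wordLength S a = i ∧ wordLength S (a⁻¹ * g) = wordLength S g - i := by
  obtain ⟨l, h1, h2, h3⟩ := wl_exists hS g
  have hg : g = (l.take i).prod * (l.drop i).prod := by rw [List.prod_take_mul_prod_drop, h3]
  have e1 : wordLength S (l.take i).prod ≤ i :=
    (wl_le fun a ha => h2 a (List.mem_of_mem_take ha)).trans (by simp)
  have e2 : wordLength S (l.drop i).prod ≤ wordLength S g - i :=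
    (wl_le fun a ha => h2 a (List.mem_of_mem_drop ha)).trans (by simp [h1])
  have e3 := wl_mul hS (l.take i).prod (l.drop i).prod
  rw [← hg] at e3
  refine ⟨(l.take i).prod, by omega, ?_⟩
  have : (l.take i).prod⁻¹ * g = (l.drop i).prod := by
    conv_lhs => rw [hg]
    group
  rw [this]; omega

lemma ball_finite (hS : Generates S) (n : ℕ) : {g : G | wordLength S g ≤ n}.Finite := by
  classical
  induction n with
  | zero =>
    refine (Set.finite_singleton (1 : G)).subset ?_
    intro g hg
    obtain ⟨l, h1, h2, h3⟩ := wl_exists hS g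
    have : l = [] := List.eq_nil_of_length_eq_zero (by simp at hg; omega)
    subst this
    simpa using h3.symm
  | succ n ih =>
    have hT : ((S : Set G) ∪ (S : Set G)⁻¹ ∪ {1}).Finite :=
      ((S.finite_toSet).union (S.finite_toSet.inv)).union (Set.finite_singleton _)
    refine (hT.mul ih).subset ?_
    intro g hg
    obtain ⟨l, h1, h2, h3⟩ := wl_exists hS g
    cases l with
    | nil =>
      refine ⟨1, by simp, 1, by simp [wl_one], ?_⟩
      simpa using h3
    | cons a t =>
      refine ⟨a, ?_, t.prod, ?_, by simpa using h3⟩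
      · rcases h2 a (by simp) with h | h
        · left; left; exact h
        · left; right; simpa using h
      · have := wl_le (S := S) (l := t) (fun b hb => h2 b (by simp [hb]))
        simp at h1 hg ⊢
        omega

lemma wd_one (x : G) : wordDist S 1 x = wordLength S x := by simp [wordDist]
lemma wd_self (x : G) : wordDist S x x = 0 := by simp [wordDist, wl_one]
lemma wd_nonneg (x y : G) : 0 ≤ wordDist S x y := by simp [wordDist]
lemma wd_symm (hS : Generates S) (x y : G) : wordDist S x y = wordDist S y x := by
  unfold wordDist
  rw [← wl_inv hS]; simp
lemma wd_one' (hS : Generates S) (x : G) : wordDist S x 1 = wordLength S x := by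
  rw [wd_symm hS, wd_one]
lemma wd_tri (hS : Generates S) (x y z : G) : wordDist S x z ≤ wordDist S x y + wordDist S y z := by
  unfold wordDist
  have := wl_mul hS (x⁻¹ * y) (y⁻¹ * z)
  rw [show x⁻¹ * y * (y⁻¹ * z) = x⁻¹ * z by group] at this
  exact_mod_cast this
lemma wd_inv (g x y : G) : wordDist S (g * x) (g * y) = wordDist S x y := by
  unfold wordDist
  congr 2; group

lemma wd_split (hS : Generates S) (x y : G) (i : ℕ) (hi : (i : ℝ) ≤ wordDist S x y) :
    ∃ a : G, wordDist S x a = i ∧ wordDist S a y = wordDist S x y - i := by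
  have hi' : i ≤ wordLength S (x⁻¹ * y) := by unfold wordDist at hi; exact_mod_cast hi
  obtain ⟨a, h1, h2⟩ := wl_split hS (x⁻¹ * y) i hi'
  refine ⟨x * a, ?_, ?_⟩
  · unfold wordDist; simp [h1]
  · unfold wordDist
    rw [show (x * a)⁻¹ * y = a⁻¹ * (x⁻¹ * y) by group, h2]
    push_cast [hi']; ring

lemma gromov_inv (g w x y : G) :
    gromov (wordDist S) (g * w) (g * x) (g * y) = gromov (wordDist S) w x y := by
  simp only [gromov, wd_inv]

end Word

section Geom
variable {S : Finset G}

lemma near_interval (hS : Generates S) {δ : ℝ} (hδ0 : 0 ≤ δ)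
    (hδ : IsHyperbolicWith (wordDist S) δ) (x y g p : G)
    (hp : wordDist S x p + wordDist S p y = wordDist S x y)
    (hmin : ∀ q, wordDist S x q + wordDist S q y = wordDist S x y →
      wordDist S g p ≤ wordDist S g q) :
    gromov (wordDist S) p x g ≤ 2 * δ + 1 := by
  by_contra hcon
  push Not at hcon
  set t := gromov (wordDist S) p x g with ht
  have ht0 : 0 ≤ t := by linarith
  have hs1 : (⌊t⌋₊ : ℝ) ≤ t := Nat.floor_le ht0
  have hs2 : t < ⌊t⌋₊ + 1 := Nat.lt_floor_add_one t
  set s := ⌊t⌋₊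
  have htx : t ≤ wordDist S p x := by
    have := wd_tri hS g x p
    have h2 := wd_symm hS g x
    have h3 := wd_symm hS x p
    rw [ht, gromov]; linarith
  obtain ⟨q, hq1, hq2⟩ := wd_split hS p x s (by linarith)
  have hqI : wordDist S x q + wordDist S q y = wordDist S x y := by
    apply le_antisymm
    · have := wd_tri hS q p y
      have h2 := wd_symm hS q p
      have h3 := wd_symm hS x p
      have h4 := wd_symm hS x q
      linarith
    · exact wd_tri hS x q y
  have h1 := hmin q hqI
  have h2 := hδ p x g q
  rw [← ht] at h2
  have e1 := wd_symm hS q p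
  have e2 := wd_symm hS x p
  have e3 := wd_symm hS x q
  have h3 : gromov (wordDist S) p x q = s := by rw [gromov]; linarith
  have h4 : gromov (wordDist S) p g q ≤ s / 2 := by rw [gromov]; linarith
  rw [h3, min_eq_right hs1] at h2
  linarith

lemma interval_dist (hS : Generates S) {δ : ℝ}
    (hδ : IsHyperbolicWith (wordDist S) δ) (x y p q : G)
    (hp : wordDist S x p + wordDist S p y = wordDist S x y)
    (hq : wordDist S x q + wordDist S q y = wordDist S x y) :
    wordDist S p q ≤ |wordDist S p x - wordDist S q x| + 2 * δ := by
  have h := hδ x y p q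
  have e1 := wd_symm hS p x
  have e2 := wd_symm hS q x
  have e3 := wd_symm hS y x
  have e4 := wd_symm hS p y
  have e5 := wd_symm hS q y
  have h1 : gromov (wordDist S) x y p = wordDist S p x := by rw [gromov]; linarith
  have h2 : gromov (wordDist S) x y q = wordDist S q x := by rw [gromov]; linarith
  rw [h1, h2, gromov] at h
  rcases le_total (wordDist S p x) (wordDist S q x) with h' | h'
  · rw [min_eq_left h'] at h
    rw [abs_of_nonpos (by linarith)]; linarith
  · rw [min_eq_right h'] at h
    rw [abs_of_nonneg (by linarith)]; linarith

lemma exists_near (hS : Generates S) {δ : ℝ} (hδ0 : 0 ≤ δ)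
    (hδ : IsHyperbolicWith (wordDist S) δ) (D : ℕ)
    (hno : ¬ ∃ y₁ y₂ y₃ : G, D ≤ wordLength S y₁ ∧ D ≤ wordLength S y₂ ∧ D ≤ wordLength S y₃ ∧
      gromov (wordDist S) 1 y₁ y₂ ≤ 2 * δ + 1 ∧ gromov (wordDist S) 1 y₁ y₃ ≤ 2 * δ + 1 ∧
      gromov (wordDist S) 1 y₂ y₃ ≤ 2 * δ + 1)
    (n : ℕ) (x y : G) (hx : wordDist S x 1 = n) (hy : wordDist S 1 y = n)
    (hxy : wordDist S x y = 2 * n) (g : G) (hn : 2 * wordLength S g + D ≤ n) :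
    ∃ p, wordDist S x p + wordDist S p y = wordDist S x y ∧ wordDist S g p ≤ D := by
  obtain ⟨p, hp, hmin⟩ : ∃ p, wordDist S x p + wordDist S p y = wordDist S x y ∧
      ∀ q, wordDist S x q + wordDist S q y = wordDist S x y →
      wordDist S g p ≤ wordDist S g q := by
    let I : Set G := {q | wordDist S x q + wordDist S q y = wordDist S x y}
    have hI : I.Nonempty := ⟨1, by simp only [I, Set.mem_ofPred_eq]; linarith⟩
    refine ⟨Function.argminOn (fun q => wordLength S (g⁻¹ * q)) I hI,
      Function.argminOn_mem (fun q => wordLength S (g⁻¹ * q)) I hI, fun q hq => ?_⟩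
    have := Function.argminOn_le (fun q => wordLength S (g⁻¹ * q)) I (a := q) hq
    unfold wordDist
    exact_mod_cast this
  refine ⟨p, hp, ?_⟩
  by_contra hD
  push Not at hD
  apply hno
  have h1 := near_interval hS hδ0 hδ x y g p hp hmin
  have h2 := near_interval hS hδ0 hδ y x g p
    (by rw [wd_symm hS y p, wd_symm hS p x, wd_symm hS y x]; linarith) (by
      intro q hq
      apply hmin
      rw [wd_symm hS y q, wd_symm hS q x, wd_symm hS y x] at hq; linarith)
  have h3 : gromov (wordDist S) p x y ≤ 2 * δ + 1 := by
    rw [gromov]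
    have := wd_symm hS p y
    linarith
  have hm := hmin 1 (by linarith)
  have hgp := wd_one' hS g
  have hnR : 2 * (wordLength S g : ℝ) + D ≤ n := by exact_mod_cast hn
  have t1 := wd_tri hS p g 1
  have t2 := wd_tri hS x p 1
  have t3 := wd_tri hS 1 p y
  have t4 := wd_symm hS p g
  have t5 := wd_symm hS 1 p
  have t6 := wd_symm hS x p
  have key : ∀ a : G, (D : ℝ) ≤ wordDist S p a → D ≤ wordLength S (p⁻¹ * a) := by
    intro a ha; unfold wordDist at ha; exact_mod_cast ha
  have tr : ∀ a b : G, gromov (wordDist S) 1 (p⁻¹ * a) (p⁻¹ * b) = gromov (wordDist S) p a b := by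
    intro a b
    rw [← gromov_inv (p⁻¹) p a b]; simp
  refine ⟨p⁻¹ * x, p⁻¹ * y, p⁻¹ * g, key _ (by linarith), key _ (by linarith),
    key _ (by linarith), ?_, ?_, ?_⟩ <;> rw [tr] <;> assumption

lemma exists_tripod (hS : Generates S) [Infinite G] {δ : ℝ} (hδ0 : 0 ≤ δ)
    (hδ : IsHyperbolicWith (wordDist S) δ) (hq : ¬ QuasiIsometric (wordDist S) intDist) (D : ℕ) :
    ∃ y₁ y₂ y₃ : G, D ≤ wordLength S y₁ ∧ D ≤ wordLength S y₂ ∧ D ≤ wordLength S y₃ ∧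
      gromov (wordDist S) 1 y₁ y₂ ≤ 2 * δ + 1 ∧ gromov (wordDist S) 1 y₁ y₃ ≤ 2 * δ + 1 ∧
      gromov (wordDist S) 1 y₂ y₃ ≤ 2 * δ + 1 := by
  by_contra hno
  apply hq
  have hends : ∀ n : ℕ, ∃ x y : G, wordDist S x 1 = n ∧ wordDist S 1 y = n ∧
      wordDist S x y = 2 * n := by
    intro n
    obtain ⟨g, hg⟩ : ∃ g : G, 2 * n < wordLength S g := by
      by_contra hcon
      push Not at hcon
      exact Set.infinite_univ ((ball_finite hS (2 * n)).subset fun g _ => hcon g)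
    obtain ⟨b, hb, -⟩ := wl_split hS g (2 * n) hg.le
    obtain ⟨a, ha, ha'⟩ := wl_split hS b n (by omega)
    refine ⟨a⁻¹, a⁻¹ * b, ?_, ?_, ?_⟩
    · rw [wd_one' hS, wl_inv hS, ha]
    · rw [wd_one, ha', hb]; congr 1; omega
    · unfold wordDist; simp [hb]
  choose x y hx hy hxy using hends
  let U := hyperfilter ℕ
  have hlim : ∀ g : G, ∃ k : ℤ, ∀ᶠ n in U, (wordLength S (g⁻¹ * x n) : ℤ) - n = k := by
    intro g
    have : ∀ᶠ n in U, ∃ k ∈ Set.Icc (-(wordLength S g : ℤ)) (wordLength S g),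
        (wordLength S (g⁻¹ * x n) : ℤ) - n = k := by
      refine Eventually.of_forall fun n => ⟨_, ?_, rfl⟩
      have h1 := wl_mul hS g⁻¹ (x n)
      have h2 := wl_mul hS g (g⁻¹ * x n)
      have h3 := hx n
      rw [wd_one' hS] at h3
      have h3 : wordLength S (x n) = n := by exact_mod_cast h3
      rw [wl_inv hS] at h1
      rw [mul_inv_cancel_left] at h2
      constructor <;> omega
    obtain ⟨k, -, hk⟩ := (Ultrafilter.eventually_exists_mem_iff (Set.finite_Icc _ _)).1 this
    exact ⟨k, hk⟩
  choose f hf using hlim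
  have hf' : ∀ g, ∀ᶠ n in U, wordDist S g (x n) = n + f g := by
    intro g
    filter_upwards [hf g] with n hn
    unfold wordDist
    have : (wordLength S (g⁻¹ * x n) : ℤ) = n + f g := by omega
    exact_mod_cast this
  refine ⟨f, 1, 4 * D + 2 * δ, 0, le_rfl, by positivity, le_rfl, ?_, ?_⟩
  · intro g h
    have hev : ∀ᶠ n in U, 2 * wordLength S g + D ≤ n ∧ 2 * wordLength S h + D ≤ n :=
      ((eventually_ge_atTop _).and (eventually_ge_atTop _)).filter_mono Nat.hyperfilter_le_atTop
    obtain ⟨n, ⟨hn1, hn2⟩, h1, h2⟩ := (hev.and ((hf' g).and (hf' h))).exists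
    have hfg : (f g : ℝ) - f h = wordDist S g (x n) - wordDist S h (x n) := by linarith
    obtain ⟨p, hp, hgp⟩ := exists_near hS hδ0 hδ D hno n _ _ (hx n) (hy n) (hxy n) g hn1
    obtain ⟨q, hq, hhq⟩ := exists_near hS hδ0 hδ D hno n _ _ (hx n) (hy n) (hxy n) h hn2
    have hpq := interval_dist hS hδ _ _ p q hp hq
    rw [intDist, hfg]
    have a1 := wd_tri hS g p h
    have a2 := wd_tri hS p q h
    have a3 := wd_symm hS q h
    have a4 := wd_tri hS g p (x n)
    have a5 := wd_tri hS p g (x n)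
    have a6 := wd_symm hS p g
    have a7 := wd_tri hS h q (x n)
    have a8 := wd_tri hS q h (x n)
    have b1 := wd_tri hS g h (x n)
    have b2 := wd_tri hS h g (x n)
    have b3 := wd_symm hS h g
    have hDn : (0 : ℝ) ≤ D := by positivity
    constructor
    · rw [div_one]
      rcases abs_cases (wordDist S p (x n) - wordDist S q (x n)) with ⟨h0, _⟩ | ⟨h0, _⟩ <;>
      rcases abs_cases (wordDist S g (x n) - wordDist S h (x n)) with ⟨h', _⟩ | ⟨h', _⟩ <;>
      linarith
    · rw [abs_le]; constructor <;> linarith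
  · intro k
    have : ∀ᶠ n in U, ∃ p ∈ {g : G | wordLength S g ≤ k.natAbs}, wordDist S p (x n) = n + k := by
      have hev : ∀ᶠ n in U, k.natAbs ≤ n :=
        (eventually_ge_atTop _).filter_mono Nat.hyperfilter_le_atTop
      filter_upwards [hev] with n hn
      have hnR : (k.natAbs : ℝ) ≤ n := by exact_mod_cast hn
      rcases le_total 0 k with hk | hk
      · obtain ⟨a, ha, ha'⟩ := wd_split hS 1 (y n) k.natAbs (by rw [hy]; exact hnR)
        refine ⟨a, ?_, ?_⟩
        · rw [wd_one] at ha
          have : wordLength S a = k.natAbs := by exact_mod_cast ha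
          exact this.le
        · have e : (k.natAbs : ℝ) = k := by
            rw [Nat.cast_natAbs, abs_of_nonneg hk]
          rw [e] at ha ha'
          have t1 := wd_tri hS (x n) 1 a
          have t2 := wd_tri hS (x n) a (y n)
          have := wd_symm hS a (x n)
          have := hx n
          have := hy n
          have := hxy n
          linarith
      · obtain ⟨a, ha, ha'⟩ := wd_split hS 1 (x n) k.natAbs (by rw [wd_symm hS, hx]; exact hnR)
        refine ⟨a, ?_, ?_⟩
        · rw [wd_one] at ha
          have : wordLength S a = k.natAbs := by exact_mod_cast ha
          exact this.le
        · have e : (k.natAbs : ℝ) = -k := by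
            rw [Nat.cast_natAbs, abs_of_nonpos hk]; push_cast; ring
          rw [ha', e, wd_symm hS, hx]; ring
    obtain ⟨p, -, hp⟩ := (Ultrafilter.eventually_exists_mem_iff (ball_finite hS _)).1 this
    refine ⟨p, ?_⟩
    obtain ⟨n, h1, h2⟩ := (hp.and (hf' p)).exists
    rw [intDist]
    have : (f p : ℝ) = k := by linarith
    rw [this]; simp

end Geom

section Growth
variable {S : Finset G}

lemma tree_growth (hS : Generates S) {δ : ℝ} (hδ0 : 0 ≤ δ)
    (hδ : IsHyperbolicWith (wordDist S) δ) (R : ℝ) (hR : 0 ≤ R) (D D' : ℕ) (y : Fin 3 → G)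
    (hlen : ∀ i, D ≤ wordLength S (y i)) (hlen' : ∀ i, wordLength S (y i) ≤ D')
    (hpair : ∀ i j, i ≠ j → gromov (wordDist S) 1 (y i) (y j) ≤ R)
    (hD : 2 * (R + 2 * δ) < D) (n : ℕ) :
    ∀ w : G, ∃ T : Finset G, 2 ^ n ≤ T.card ∧
      ∀ z ∈ T, wordLength S z ≤ n * D' ∧ gromov (wordDist S) 1 w z ≤ R + 2 * δ := by
  classical
  induction n with
  | zero =>
    intro w
    refine ⟨{1}, by simp, ?_⟩
    intro z hz
    rw [Finset.mem_singleton] at hz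
    subst hz
    simp only [wl_one, gromov, wd_self, zero_mul, le_refl, true_and]
    linarith
  | succ n ih =>
    intro w
    have hbad : ∀ i j, i ≠ j → gromov (wordDist S) 1 w (y i) ≤ R + δ ∨
        gromov (wordDist S) 1 w (y j) ≤ R + δ := by
      intro i j hij
      by_contra hcon
      push Not at hcon
      have h1 := hδ 1 w (y i) (y j)
      have h2 := hpair i j hij
      have h3 := lt_min hcon.1 hcon.2
      linarith
    obtain ⟨i, j, hij, hi, hj⟩ : ∃ i j, i ≠ j ∧ gromov (wordDist S) 1 w (y i) ≤ R + δ ∧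
        gromov (wordDist S) 1 w (y j) ≤ R + δ := by
      have a := hbad 0 1 (by decide)
      have b := hbad 0 2 (by decide)
      have c := hbad 1 2 (by decide)
      by_cases h0 : gromov (wordDist S) 1 w (y 0) ≤ R + δ
      · rcases c with c | c
        · exact ⟨0, 1, by decide, h0, c⟩
        · exact ⟨0, 2, by decide, h0, c⟩
      · exact ⟨1, 2, by decide, a.resolve_left h0, b.resolve_left h0⟩
    have step : ∀ i, gromov (wordDist S) 1 w (y i) ≤ R + δ → ∃ T : Finset G, 2 ^ n ≤ T.card ∧
        ∀ z ∈ T, wordLength S z ≤ (n + 1) * D' ∧ gromov (wordDist S) 1 w z ≤ R + 2 * δ ∧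
          D - (R + 2 * δ) ≤ gromov (wordDist S) 1 z (y i) := by
      intro i hi
      obtain ⟨T, hT, hz⟩ := ih (y i)⁻¹
      refine ⟨T.image (fun z => y i * z), ?_, ?_⟩
      · rwa [Finset.card_image_of_injective _ (mul_right_injective _)]
      · intro z' hz'
        obtain ⟨z, hzT, rfl⟩ := Finset.mem_image.1 hz'
        obtain ⟨h1, h2⟩ := hz z hzT
        have hl := hlen i
        have hl' := hlen' i
        have hlR : (D : ℝ) ≤ wordLength S (y i) := by exact_mod_cast hl
        have h3 : D - (R + 2 * δ) ≤ gromov (wordDist S) 1 (y i * z) (y i) := by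
          rw [← gromov_inv (y i)] at h2
          rw [mul_inv_cancel, mul_one, gromov, wd_one] at h2
          rw [gromov, wd_one' hS (y i)]
          have e1 := wd_symm hS 1 (y i * z)
          have e2 := wd_one (S := S) (y i)
          linarith
        refine ⟨?_, ?_, h3⟩
        · have := wl_mul hS (y i) z
          rw [add_mul]; omega
        · have h4 := hδ 1 (y i * z) w (y i)
          have h5 : gromov (wordDist S) 1 (y i * z) w = gromov (wordDist S) 1 w (y i * z) := by
            simp only [gromov, wd_symm hS w (y i * z)]; ring
          rw [h5] at h4
          by_contra hcon
          push Not at hcon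
          have h6 : R + 2 * δ < min (gromov (wordDist S) 1 w (y i * z))
            (gromov (wordDist S) 1 (y i * z) (y i)) := lt_min hcon (by linarith)
          linarith
    obtain ⟨T, hT, hz⟩ := step i hi
    obtain ⟨T', hT', hz'⟩ := step j hj
    have hdis : Disjoint T T' := by
      rw [Finset.disjoint_left]
      intro z h1 h2
      have a := (hz z h1).2.2
      have b := (hz' z h2).2.2
      have c := hδ 1 z (y i) (y j)
      have d := hpair i j hij
      have e := le_min a b
      linarith
    refine ⟨T ∪ T', ?_, ?_⟩
    · rw [Finset.card_union_of_disjoint hdis, pow_succ]; omega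
    · intro z h
      rcases Finset.mem_union.1 h with h | h
      · exact ⟨(hz z h).1, (hz z h).2.1⟩
      · exact ⟨(hz' z h).1, (hz' z h).2.1⟩

lemma exists_jump (β : ℕ → ℕ) (D : ℕ) (hβ : ∀ n, 2 ^ n ≤ β (n * D)) (K₀ : ℕ) :
    ∃ K, K₀ ≤ K ∧ 16 * β K ≤ β (K + 8 * D) := by
  by_contra hcon
  push Not at hcon
  have hup : ∀ n, β (K₀ * D + n * (8 * D)) ≤ 16 ^ n * β (K₀ * D) := by
    intro n
    induction n with
    | zero => simp
    | succ n ih =>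
      have hD : 0 < D ∨ D = 0 := by omega
      rcases hD with hD | hD
      · have h1 : K₀ ≤ K₀ * D + n * (8 * D) := by nlinarith
        have := hcon _ h1
        rw [show K₀ * D + (n + 1) * (8 * D) = K₀ * D + n * (8 * D) + 8 * D by ring, pow_succ]
        nlinarith
      · subst hD
        simpa only [Nat.mul_zero, Nat.add_zero] using
          Nat.le_mul_of_pos_left (β 0) (by positivity : 0 < 16 ^ (n + 1))
  obtain ⟨n, hn⟩ : ∃ n, β (K₀ * D) < 2 ^ n := ⟨_, Nat.lt_two_pow_self⟩
  have h1 := hup n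
  have h2 := hβ (K₀ + 8 * n)
  rw [show (K₀ + 8 * n) * D = K₀ * D + n * (8 * D) by ring] at h2
  have h3 : 2 ^ (K₀ + 8 * n) = 2 ^ K₀ * (16 ^ n * 16 ^ n) := by
    rw [pow_add, pow_mul, ← mul_pow]; norm_num
  have h4 : 1 ≤ 2 ^ K₀ := Nat.one_le_two_pow
  have h5 : 2 ^ n ≤ 16 ^ n := Nat.pow_le_pow_left (by norm_num) n
  have h6 : 0 < 16 ^ n := by positivity
  have h7 : 16 ^ n * 16 ^ n ≤ 16 ^ n * β (K₀ * D) := by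
    calc 16 ^ n * 16 ^ n ≤ 2 ^ K₀ * (16 ^ n * 16 ^ n) := Nat.le_mul_of_pos_left _ (by positivity)
      _ ≤ _ := by rw [← h3]; exact h2.trans h1
  have := Nat.le_of_mul_le_mul_left h7 h6
  omega

lemma exists_drift (hS : Generates S) {δ : ℝ}
    (hδ : IsHyperbolicWith (wordDist S) δ) (D : ℕ)
    (hβ : ∀ n, 2 ^ n ≤ (ball_finite hS (n * D)).toFinset.card) :
    ∃ K : ℕ, ∀ x : G, ((ball_finite hS K).toFinset.card : ℝ) * (wordLength S x + 1) ≤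
      ∑ u ∈ (ball_finite hS K).toFinset, (wordLength S (x * u) : ℝ) := by
  classical
  set d := ⌈2 * δ⌉₊ with hd
  have hdδ : 2 * δ ≤ d := Nat.le_ceil _
  have hpos : ∀ n, 0 < (ball_finite hS n).toFinset.card := fun n =>
    Finset.card_pos.2 ⟨1, by simp [wl_one]⟩
  obtain ⟨K', hK', hJ⟩ := exists_jump (fun n => (ball_finite hS n).toFinset.card) D hβ
    (100 * (8 * D + d + 1))
  set T' := 8 * D with hT'
  set T := T' + d with hT
  refine ⟨K' + T', fun x => ?_⟩
  set B := (ball_finite hS (K' + T')).toFinset with hB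
  set N : ℝ := (B.card : ℝ) with hN
  have hmemB : ∀ u, u ∈ B ↔ wordLength S u ≤ K' + T' := by simp [hB]
  have hJR : 16 * ((ball_finite hS K').toFinset.card : ℝ) ≤ N := by rw [hN]; exact_mod_cast hJ
  -- near set
  set w := x⁻¹ with hw
  set g : G → ℝ := fun u => gromov (wordDist S) 1 w u with hg
  have hxu : ∀ u, (wordLength S (x * u) : ℝ) = wordLength S x + wordLength S u - 2 * g u := by
    intro u
    simp only [hg, gromov, wd_one' hS, hw, wl_inv hS]
    simp only [wordDist, inv_inv]; ring
  have hgle : ∀ u, g u ≤ wordLength S u := by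
    intro u
    have h1 := wd_tri hS w u 1
    simp only [hg, gromov]
    rw [wd_one' hS u] at *
    linarith
  have hglew : ∀ u, g u ≤ wordLength S w := by
    intro u
    have h1 := wd_tri hS u w 1
    have := wd_symm hS u w
    simp only [hg, gromov]
    rw [wd_one' hS w] at *
    linarith
  have hc1 : ((B.filter fun u => (T : ℝ) ≤ g u).card : ℝ) ≤ N / 16 := by
    rcases (B.filter fun u => (T : ℝ) ≤ g u).eq_empty_or_nonempty with h0 | ⟨u₀, hu₀⟩
    · rw [h0]; simp; positivity
    have hTw : (T : ℝ) ≤ wordDist S 1 w := by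
      rw [wd_one]; exact ((Finset.mem_filter.1 hu₀).2).trans (hglew u₀)
    obtain ⟨a, ha, ha'⟩ := wd_split hS 1 w T hTw
    have : (B.filter fun u => (T : ℝ) ≤ g u).card ≤ (ball_finite hS K').toFinset.card := by
      apply Finset.card_le_card_of_injOn (fun u => a⁻¹ * u)
      · intro u hu
        rw [Finset.mem_coe, Finset.mem_filter, hmemB] at hu
        obtain ⟨hu1, hu2⟩ := hu
        simp only [Set.Finite.coe_toFinset, Set.mem_ofPred_eq]
        have h1 := hδ 1 w a u
        have h2 : gromov (wordDist S) 1 w a = T := by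
          rw [gromov]
          have := wd_symm hS w a
          have := wd_symm hS a 1
          have := wd_symm hS w 1
          linarith
        have h3 : (T : ℝ) ≤ min (gromov (wordDist S) 1 w a) (gromov (wordDist S) 1 w u) :=
          le_min h2.ge hu2
        have h4 : (T : ℝ) - δ ≤ gromov (wordDist S) 1 a u := by linarith
        rw [gromov, wd_symm hS a 1, ha, wd_one' hS] at h4
        have hu1' : (wordLength S u : ℝ) ≤ K' + T' := by exact_mod_cast hu1
        have hTR : (T : ℝ) = T' + d := by rw [hT]; push_cast; ring
        have h5 : wordDist S a u ≤ K' := by linarith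
        unfold wordDist at h5
        exact_mod_cast h5
      · exact (mul_right_injective a⁻¹).injOn
    have : ((B.filter fun u => (T : ℝ) ≤ g u).card : ℝ) ≤ (ball_finite hS K').toFinset.card := by
      exact_mod_cast this
    linarith
  have hc2 : ((B.filter fun u => wordLength S u ≤ K').card : ℝ) ≤ N / 16 := by
    have : (B.filter fun u => wordLength S u ≤ K').card ≤ (ball_finite hS K').toFinset.card := by
      apply Finset.card_le_card
      intro u hu
      simpa using (Finset.mem_filter.1 hu).2
    have : ((B.filter fun u => wordLength S u ≤ K').card : ℝ) ≤ (ball_finite hS K').toFinset.card := by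
      exact_mod_cast this
    linarith
  have hpt : ∀ u ∈ B, (K' : ℝ) - 2 * T - (if wordLength S u ≤ K' then (K' : ℝ) else 0)
      - (if (T : ℝ) ≤ g u then 2 * ((K' : ℝ) + T') else 0) ≤ wordLength S u - 2 * g u := by
    intro u hu
    have h1 : (wordLength S u : ℝ) ≤ K' + T' := by exact_mod_cast (hmemB u).1 hu
    have h2 := hgle u
    have h3 : (0 : ℝ) ≤ wordLength S u := by positivity
    have h4 : (0 : ℝ) ≤ T := by positivity
    have h5 : (0 : ℝ) ≤ K' := by positivity
    split_ifs with ha hb hb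
    · linarith
    · push Not at hb; linarith
    · push Not at ha
      have : (K' : ℝ) < wordLength S u := by exact_mod_cast ha
      linarith
    · push Not at ha hb
      have : (K' : ℝ) < wordLength S u := by exact_mod_cast ha
      linarith
  have hsum := Finset.sum_le_sum hpt
  rw [Finset.sum_sub_distrib, Finset.sum_sub_distrib, ← Finset.sum_filter, ← Finset.sum_filter,
    Finset.sum_const, Finset.sum_const, Finset.sum_const] at hsum
  simp only [nsmul_eq_mul] at hsum
  have hfin : ∑ u ∈ B, (wordLength S (x * u) : ℝ) =
      N * wordLength S x + ∑ u ∈ B, ((wordLength S u : ℝ) - 2 * g u) := by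
    rw [Finset.sum_congr rfl fun u _ => hxu u]
    rw [hN, ← nsmul_eq_mul, ← Finset.sum_const, ← Finset.sum_add_distrib]
    exact Finset.sum_congr rfl fun u _ => by ring
  rw [hfin]
  have hNpos : 0 < N := by rw [hN]; exact_mod_cast hpos _
  have hKR : 100 * ((T' : ℝ) + d + 1) ≤ K' := by exact_mod_cast hK'
  have hTR : (T : ℝ) = T' + d := by rw [hT]; push_cast; ring
  have hdn : (0 : ℝ) ≤ d := by positivity
  have hTn : (0 : ℝ) ≤ T' := by positivity
  have hKn : (0 : ℝ) ≤ K' := by positivity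
  have q1 := mul_le_mul_of_nonneg_right hc1 (by positivity : (0 : ℝ) ≤ 2 * ((K' : ℝ) + T'))
  have q2 := mul_le_mul_of_nonneg_right hc2 hKn
  have q3 : N * 1 ≤ N * (K' - 2 * T - K' / 16 - (K' + T') / 8) := by
    apply mul_le_mul_of_nonneg_left _ hNpos.le
    linarith
  linarith

lemma exists_drift' (hS : Generates S) [Infinite G] (hh : IsHyperbolic (wordDist S))
    (hq : ¬ QuasiIsometric (wordDist S) intDist) :
    ∃ K : ℕ, ∀ x : G, ((ball_finite hS K).toFinset.card : ℝ) * (wordLength S x + 1) ≤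
      ∑ u ∈ (ball_finite hS K).toFinset, (wordLength S (x * u) : ℝ) := by
  classical
  obtain ⟨δ, hδ0, hδ⟩ := hh
  obtain ⟨D, hD⟩ := exists_nat_gt (2 * ((2 * δ + 1) + 2 * δ))
  obtain ⟨y₁, y₂, y₃, l1, l2, l3, p1, p2, p3⟩ := exists_tripod hS hδ0 hδ hq D
  set D' := wordLength S y₁ + wordLength S y₂ + wordLength S y₃ with hD'
  refine exists_drift hS hδ D' fun n => ?_
  have gs : ∀ a b : G, gromov (wordDist S) 1 a b = gromov (wordDist S) 1 b a := by
    intro a b; simp only [gromov, wd_symm hS a b]; ring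
  obtain ⟨T, hT, hz⟩ := tree_growth hS hδ0 hδ (2 * δ + 1) (by linarith) D D' ![y₁, y₂, y₃]
    (by intro i; fin_cases i <;> simpa) (by intro i; fin_cases i <;> simp [hD'] <;> omega)
    (by
      intro i j hij
      fin_cases i <;> fin_cases j <;> first | exact absurd rfl hij | simpa using p1 | simpa using p2 | simpa using p3 | (rw [gs]; simpa using p1) | (rw [gs]; simpa using p2) | (rw [gs]; simpa using p3)) hD n 1
  refine hT.trans (Finset.card_le_card fun z h => ?_)
  simpa using (hz z h).1

end Growth

section Poincare
variable {S : Finset G}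

/-- Squared `ℓ²` norm. -/
def sqN (f : G → ℝ) : ℝ≥0∞ := ∑' x, ENNReal.ofReal (f x ^ 2)

/-- Squared `ℓ²` norm of a right increment. -/
def incr (u : G) (f : G → ℝ) : ℝ≥0∞ := ∑' x, ENNReal.ofReal ((f x - f (x * u)) ^ 2)

/-- First moment of `f²`. -/
def sqM (S : Finset G) (f : G → ℝ) : ℝ≥0∞ := ∑' x, ENNReal.ofReal (f x ^ 2) * (wordLength S x : ℝ≥0∞)

/-- Dirichlet form. -/
def dirich (μ : G → ℝ) (f : G → ℝ) : ℝ≥0∞ := ∑' h, ENNReal.ofReal (μ h) * incr h f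

lemma tsum_mul_right_shift (u : G) (F : G → ℝ≥0∞) : ∑' x, F (x * u) = ∑' x, F x :=
  (Equiv.mulRight u).tsum_eq F

lemma poincare_ball (hS : Generates S) (K : ℕ)
    (hK : ∀ x : G, ((ball_finite hS K).toFinset.card : ℝ) * (wordLength S x + 1) ≤
      ∑ u ∈ (ball_finite hS K).toFinset, (wordLength S (x * u) : ℝ))
    (f : G → ℝ) (h1 : sqN f ≠ ⊤) (h2 : sqM S f ≠ ⊤) :
    ((ball_finite hS K).toFinset.card : ℝ≥0∞) * sqN f ≤
      (K : ℝ≥0∞) ^ 2 * ∑ u ∈ (ball_finite hS K).toFinset, incr u f := by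
  classical
  set B := (ball_finite hS K).toFinset with hB
  have hmem : ∀ u, u ∈ B ↔ wordLength S u ≤ K := by simp [hB]
  set F : G → ℝ≥0∞ := fun x => ENNReal.ofReal (f x ^ 2) with hF
  set A : G → ℝ≥0∞ := fun u => ∑' x, F x * (wordLength S (x * u) : ℝ≥0∞) with hA
  have hlow : (B.card : ℝ≥0∞) * (sqM S f + sqN f) ≤ ∑ u ∈ B, A u := by
    rw [hA, sqM, sqN, ← ENNReal.tsum_add, ← ENNReal.tsum_mul_left,
      ← Summable.tsum_finsetSum (fun _ _ => ENNReal.summable)]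
    refine ENNReal.tsum_le_tsum fun x => ?_
    have hx := hK x
    have hx' : B.card * (wordLength S x + 1) ≤ ∑ u ∈ B, wordLength S (x * u) := by exact_mod_cast hx
    have hx2 : (B.card : ℝ≥0∞) * ((wordLength S x : ℝ≥0∞) + 1) ≤
        ∑ u ∈ B, (wordLength S (x * u) : ℝ≥0∞) := by exact_mod_cast hx'
    rw [← Finset.mul_sum]
    calc (B.card : ℝ≥0∞) * (F x * (wordLength S x : ℝ≥0∞) + F x)
        = F x * ((B.card : ℝ≥0∞) * ((wordLength S x : ℝ≥0∞) + 1)) := by ring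
      _ ≤ _ := by gcongr
  have hup : ∀ u ∈ B, A u + A u⁻¹ ≤ 2 * sqM S f + (K : ℝ≥0∞) ^ 2 * incr u f + sqN f := by
    intro u hu
    have hu' := (hmem u).1 hu
    have e1 : A u⁻¹ = ∑' x, F (x * u) * (wordLength S x : ℝ≥0∞) := by
      have := tsum_mul_right_shift u (fun x => F x * (wordLength S (x * u⁻¹) : ℝ≥0∞))
      simp only [mul_inv_cancel_right] at this
      exact this.symm
    have e2 : sqM S f = ∑' x, F (x * u) * (wordLength S (x * u) : ℝ≥0∞) := by
      rw [sqM, ← tsum_mul_right_shift u]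
    have e3 : sqN f = ∑' x, F (x * u) := by
      rw [sqN, ← tsum_mul_right_shift u]
    have main : A u + A u⁻¹ ≤ (sqM S f + sqM S f + (K : ℝ≥0∞) ^ 2 * incr u f) +
        2⁻¹ * (sqN f + sqN f) := by
      rw [e1]
      nth_rw 2 [e2]
      nth_rw 2 [e3]
      rw [hA, sqM, incr, sqN]
      simp only [← ENNReal.tsum_mul_left, ← ENNReal.tsum_add]
      refine ENNReal.tsum_le_tsum fun x => ?_
      have hr : f x ^ 2 * (wordLength S (x * u) : ℝ) + f (x * u) ^ 2 * (wordLength S x : ℝ) ≤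
          f x ^ 2 * (wordLength S x : ℝ) + f (x * u) ^ 2 * (wordLength S (x * u) : ℝ) +
          (K : ℝ) ^ 2 * (f x - f (x * u)) ^ 2 + 2⁻¹ * (f x ^ 2 + f (x * u) ^ 2) := by
        have k1 := wl_mul hS x u
        have k2 := wl_mul hS (x * u) u⁻¹
        rw [mul_inv_cancel_right, wl_inv hS] at k2
        have k1' : (wordLength S (x * u) : ℝ) ≤ wordLength S x + K := by exact_mod_cast k1.trans (by omega)
        have k2' : (wordLength S x : ℝ) ≤ wordLength S (x * u) + K := by exact_mod_cast k2.trans (by omega)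
        set a := f x
        set b := f (x * u)
        set m := (wordLength S (x * u) : ℝ) - wordLength S x with hm
        have hm2 : m ^ 2 ≤ (K : ℝ) ^ 2 := by
          apply sq_le_sq'
          · linarith
          · linarith
        have : (a ^ 2 - b ^ 2) * m ≤ (K : ℝ) ^ 2 * (a - b) ^ 2 + 2⁻¹ * (a ^ 2 + b ^ 2) := by
          have s1 : m ^ 2 * (a - b) ^ 2 ≤ (K : ℝ) ^ 2 * (a - b) ^ 2 :=
            mul_le_mul_of_nonneg_right hm2 (sq_nonneg _)
          nlinarith [sq_nonneg (m * (a - b) - 2⁻¹ * (a + b)), sq_nonneg (a - b)]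
        rw [hm] at this
        linarith
      have := ENNReal.ofReal_le_ofReal hr
      rw [ENNReal.ofReal_add (by positivity) (by positivity),
        ENNReal.ofReal_add (by positivity) (by positivity),
        ENNReal.ofReal_add (by positivity) (by positivity),
        ENNReal.ofReal_add (by positivity) (by positivity),
        ENNReal.ofReal_mul (by positivity), ENNReal.ofReal_mul (by positivity),
        ENNReal.ofReal_mul (by positivity), ENNReal.ofReal_mul (by positivity),
        ENNReal.ofReal_mul (by positivity), ENNReal.ofReal_mul (by positivity),
        ENNReal.ofReal_add (by positivity) (by positivity),
        ENNReal.ofReal_pow (by positivity) 2 (p := (K : ℝ)),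
        ENNReal.ofReal_natCast, ENNReal.ofReal_natCast, ENNReal.ofReal_natCast,
        ENNReal.ofReal_inv_of_pos (by norm_num)] at this
      simpa [hF] using this
    have h3 : (2⁻¹ : ℝ≥0∞) * (sqN f + sqN f) = sqN f := by
      rw [← two_mul, ← mul_assoc, ENNReal.inv_mul_cancel (by norm_num) (by norm_num), one_mul]
    rw [h3] at main
    rw [two_mul]
    exact main
  have hinv : ∑ u ∈ B, A u⁻¹ = ∑ u ∈ B, A u := by
    refine Finset.sum_nbij' (fun u => u⁻¹) (fun u => u⁻¹) ?_ ?_ ?_ ?_ ?_ <;>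
      simp [hmem, wl_inv hS]
  have hsum := Finset.sum_le_sum hup
  rw [Finset.sum_add_distrib, hinv, Finset.sum_add_distrib, Finset.sum_add_distrib,
    Finset.sum_const, Finset.sum_const, ← Finset.mul_sum, nsmul_eq_mul, nsmul_eq_mul] at hsum
  have hfin : (B.card : ℝ≥0∞) * (2 * sqM S f + sqN f) ≠ ⊤ := by
    refine ENNReal.mul_ne_top (by simp) ?_
    exact ENNReal.add_ne_top.2 ⟨ENNReal.mul_ne_top (by simp) h2, h1⟩
  have : (B.card : ℝ≥0∞) * sqN f + (B.card : ℝ≥0∞) * (2 * sqM S f + sqN f) ≤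
      (K : ℝ≥0∞) ^ 2 * ∑ u ∈ B, incr u f + (B.card : ℝ≥0∞) * (2 * sqM S f + sqN f) := by
    calc _ = (B.card : ℝ≥0∞) * (sqM S f + sqN f) + (B.card : ℝ≥0∞) * (sqM S f + sqN f) := by ring
      _ ≤ _ := add_le_add hlow hlow
      _ ≤ _ := hsum
      _ = _ := by ring
  exact ENNReal.le_of_add_le_add_right hfin this

lemma incr_inv (u : G) (f : G → ℝ) : incr u⁻¹ f = incr u f := by
  rw [incr, ← tsum_mul_right_shift u, incr]
  congr 1; ext x
  congr 1
  simp only [mul_inv_cancel_right]; ring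

lemma incr_mul (u v : G) (f : G → ℝ) : incr (u * v) f ≤ 2 * (incr u f + incr v f) := by
  have : incr v f = ∑' x, ENNReal.ofReal ((f (x * u) - f (x * u * v)) ^ 2) := by
    rw [incr, ← tsum_mul_right_shift u]
  rw [this, incr, incr, ← ENNReal.tsum_add, ← ENNReal.tsum_mul_left]
  refine ENNReal.tsum_le_tsum fun x => ?_
  rw [← ENNReal.ofReal_add (by positivity) (by positivity),
    show (2 : ℝ≥0∞) = ENNReal.ofReal 2 by simp, ← ENNReal.ofReal_mul (by positivity)]
  apply ENNReal.ofReal_le_ofReal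
  rw [mul_assoc]
  nlinarith [sq_nonneg ((f x - f (x * u)) - (f (x * u) - f (x * (u * v))))]

lemma incr_le_dirich (μ : G → ℝ) (hpos : ∀ g, 0 ≤ μ g) (hgen : GeneratesSupp μ) (g : G) :
    ∃ C : NNReal, ∀ f : G → ℝ, incr g f ≤ C * dirich μ f := by
  have hg : g ∈ Subgroup.closure {g : G | μ g ≠ 0} := by
    rw [show Subgroup.closure {g : G | μ g ≠ 0} = ⊤ from hgen]; trivial
  induction hg using Subgroup.closure_induction with
  | mem x hx =>
    have hx' : 0 < μ x := lt_of_le_of_ne (hpos x) (Ne.symm hx)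
    refine ⟨(Real.toNNReal (μ x))⁻¹, fun f => ?_⟩
    have h : ENNReal.ofReal (μ x) * incr x f ≤ dirich μ f :=
      ENNReal.le_tsum (f := fun h => ENNReal.ofReal (μ h) * incr h f) x
    have h0 : Real.toNNReal (μ x) ≠ 0 := by simpa using hx'
    rw [ENNReal.coe_inv h0]
    calc incr x f = (Real.toNNReal (μ x) : ℝ≥0∞)⁻¹ * ((Real.toNNReal (μ x) : ℝ≥0∞) * incr x f) := by
          rw [← mul_assoc, ENNReal.inv_mul_cancel (by simpa using hx') (by simp), one_mul]
      _ ≤ _ := by gcongr; exact h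
  | one => exact ⟨0, fun f => by simp [incr]⟩
  | mul x y _ _ hx hy =>
    obtain ⟨C, hC⟩ := hx
    obtain ⟨C', hC'⟩ := hy
    refine ⟨2 * (C + C'), fun f => (incr_mul x y f).trans ?_⟩
    push_cast
    rw [mul_assoc, add_mul]
    gcongr
    · exact hC f
    · exact hC' f
  | inv x _ hx =>
    obtain ⟨C, hC⟩ := hx
    exact ⟨C, fun f => by rw [incr_inv]; exact hC f⟩

lemma poincare (hS : Generates S) [Infinite G] (hh : IsHyperbolic (wordDist S))
    (hq : ¬ QuasiIsometric (wordDist S) intDist)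
    (μ : G → ℝ) (hpos : ∀ g, 0 ≤ μ g) (hgen : GeneratesSupp μ) :
    ∃ C : NNReal, ∀ f : G → ℝ, sqN f ≠ ⊤ → sqM S f ≠ ⊤ → sqN f ≤ C * dirich μ f := by
  classical
  obtain ⟨K, hK⟩ := exists_drift' hS hh hq
  choose c hc using incr_le_dirich μ hpos hgen
  refine ⟨(K : NNReal) ^ 2 * ∑ u ∈ (ball_finite hS K).toFinset, c u, fun f h1 h2 => ?_⟩
  have h := poincare_ball hS K hK f h1 h2
  have h3 : (1 : ℝ≥0∞) ≤ ((ball_finite hS K).toFinset.card : ℝ≥0∞) := by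
    have : 0 < (ball_finite hS K).toFinset.card :=
      Finset.card_pos.2 ⟨1, by simp [wl_one]⟩
    exact_mod_cast this
  calc sqN f = 1 * sqN f := (one_mul _).symm
    _ ≤ _ := by gcongr
    _ ≤ _ := h
    _ ≤ (K : ℝ≥0∞) ^ 2 * ∑ u ∈ (ball_finite hS K).toFinset, (c u : ℝ≥0∞) * dirich μ f := by
      gcongr with u hu
      exact hc u f
    _ = _ := by
      rw [← Finset.sum_mul]; push_cast; ring

end Poincare

section Walk
variable {S : Finset G}

/-- The mixed Dirichlet form. -/
def crossT (μ : G → ℝ) (f h : G → ℝ) : ℝ≥0∞ :=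
  ∑' g, ENNReal.ofReal (μ g) * ∑' x, ENNReal.ofReal ((f x - h (x * g)) ^ 2)

lemma crossT_symm (μ : G → ℝ) (hsymm : IsSymmetric μ) (f h : G → ℝ) :
    crossT μ f h = ∑' g, ENNReal.ofReal (μ g) * ∑' x, ENNReal.ofReal ((f (x * g) - h x) ^ 2) := by
  rw [crossT, ← (Equiv.inv G).tsum_eq]
  refine tsum_congr fun g => ?_
  simp only [Equiv.inv_apply]
  rw [hsymm g]
  congr 1
  have := tsum_mul_right_shift g (fun x => ENNReal.ofReal ((f x - h (x * g⁻¹)) ^ 2))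
  simp only [mul_inv_cancel_right] at this
  exact this.symm

lemma dirich_pair (μ : G → ℝ) (hsymm : IsSymmetric μ) (f h : G → ℝ) :
    dirich μ (fun x => f x + h x) + dirich μ (fun x => |f x - h x|) ≤ 4 * crossT μ f h := by
  have e : 4 * crossT μ f h = 2 * (crossT μ f h + crossT μ f h) := by ring
  rw [e]
  nth_rw 2 [crossT_symm μ hsymm]
  rw [crossT, dirich, dirich, ← ENNReal.tsum_add, ← ENNReal.tsum_add, ← ENNReal.tsum_mul_left]
  refine ENNReal.tsum_le_tsum fun g => ?_
  rw [← mul_add, ← mul_add, mul_left_comm]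
  gcongr
  rw [incr, incr, ← ENNReal.tsum_add, ← ENNReal.tsum_add, ← ENNReal.tsum_mul_left]
  refine ENNReal.tsum_le_tsum fun x => ?_
  rw [← ENNReal.ofReal_add (by positivity) (by positivity),
    ← ENNReal.ofReal_add (by positivity) (by positivity),
    show (2 : ℝ≥0∞) = ENNReal.ofReal 2 by simp, ← ENNReal.ofReal_mul (by positivity)]
  apply ENNReal.ofReal_le_ofReal
  have h1 : (|f x - h x| - |f (x * g) - h (x * g)|) ^ 2 ≤
      ((f x - h x) + (f (x * g) - h (x * g))) ^ 2 := by
    rw [← sq_abs, ← sq_abs ((f x - h x) + (f (x * g) - h (x * g)))]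
    apply pow_le_pow_left₀ (abs_nonneg _)
    have := abs_abs_sub_abs_le_abs_sub (f x - h x) (-(f (x * g) - h (x * g)))
    rwa [abs_neg, sub_neg_eq_add] at this
  nlinarith [h1]

lemma sqN_pair (f h : G → ℝ) :
    sqN (fun x => f x + h x) + sqN (fun x => |f x - h x|) = 2 * (sqN f + sqN h) := by
  simp only [sqN]
  rw [← ENNReal.tsum_add, ← ENNReal.tsum_add, ← ENNReal.tsum_mul_left]
  refine tsum_congr fun x => ?_
  rw [← ENNReal.ofReal_add (by positivity) (by positivity),
    ← ENNReal.ofReal_add (by positivity) (by positivity),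
    show (2 : ℝ≥0∞) = ENNReal.ofReal 2 by simp, ← ENNReal.ofReal_mul (by positivity), sq_abs]
  congr 1; ring

lemma sqM_pair (f h : G → ℝ) :
    sqM S (fun x => f x + h x) + sqM S (fun x => |f x - h x|) = 2 * (sqM S f + sqM S h) := by
  simp only [sqM]
  rw [← ENNReal.tsum_add, ← ENNReal.tsum_add, ← ENNReal.tsum_mul_left]
  refine tsum_congr fun x => ?_
  rw [← add_mul, ← add_mul, ← mul_assoc]
  rw [← ENNReal.ofReal_add (by positivity) (by positivity),
    ← ENNReal.ofReal_add (by positivity) (by positivity),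
    show (2 : ℝ≥0∞) = ENNReal.ofReal 2 by simp, ← ENNReal.ofReal_mul (by positivity), sq_abs]
  congr 2; ring

lemma cross_bound (μ : G → ℝ) (hsymm : IsSymmetric μ) (C : NNReal)
    (hC : ∀ f : G → ℝ, sqN f ≠ ⊤ → sqM S f ≠ ⊤ → sqN f ≤ C * dirich μ f) (f h : G → ℝ)
    (hf : sqN f ≠ ⊤) (hh : sqN h ≠ ⊤) (hf' : sqM S f ≠ ⊤) (hh' : sqM S h ≠ ⊤) :
    sqN f + sqN h ≤ (2 * C) * crossT μ f h := by
  have a := sqN_pair f h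
  have b := sqM_pair (S := S) f h
  have a1 : 2 * (sqN f + sqN h) ≠ ⊤ := ENNReal.mul_ne_top (by simp) (ENNReal.add_ne_top.2 ⟨hf, hh⟩)
  have b1 : 2 * (sqM S f + sqM S h) ≠ ⊤ :=
    ENNReal.mul_ne_top (by simp) (ENNReal.add_ne_top.2 ⟨hf', hh'⟩)
  rw [← a] at a1
  rw [← b] at b1
  rw [ENNReal.add_ne_top] at a1 b1
  have : 2 * (sqN f + sqN h) ≤ 2 * ((2 * C) * crossT μ f h) := by
    rw [← a]
    calc _ ≤ _ := add_le_add (hC _ a1.1 b1.1) (hC _ a1.2 b1.2)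
      _ = C * (dirich μ (fun x => f x + h x) + dirich μ (fun x => |f x - h x|)) := by ring
      _ ≤ C * (4 * crossT μ f h) := by gcongr; exact dirich_pair μ hsymm f h
      _ = _ := by ring
  exact (ENNReal.mul_le_mul_iff_right (by simp) (by simp)).1 this

lemma cross_eq (μ : G → ℝ) (hpos : ∀ g, 0 ≤ μ g) (hsum : ∑' g, ENNReal.ofReal (μ g) = 1)
    (f h : G → ℝ) (hf : ∀ x, 0 ≤ f x) (hh : ∀ x, 0 ≤ h x)
    (hconv : ∀ g, ENNReal.ofReal (h g) =
      ∑' y, ENNReal.ofReal (f y) * ENNReal.ofReal (μ (y⁻¹ * g))) :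
    crossT μ f h + 2 * sqN h = sqN f + sqN h := by
  have h1 : sqN h = ∑' g, ENNReal.ofReal (μ g) *
      ∑' x, ENNReal.ofReal (f x) * ENNReal.ofReal (h (x * g)) := by
    calc sqN h = ∑' z, ENNReal.ofReal (h z) * ENNReal.ofReal (h z) := by
          rw [sqN]; refine tsum_congr fun z => ?_
          rw [← ENNReal.ofReal_mul (hh z), sq]
      _ = ∑' z, ∑' y, ENNReal.ofReal (h z) *
          (ENNReal.ofReal (f y) * ENNReal.ofReal (μ (y⁻¹ * z))) := by
          refine tsum_congr fun z => ?_
          rw [ENNReal.tsum_mul_left, ← hconv]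
      _ = ∑' y, ∑' z, ENNReal.ofReal (h z) *
          (ENNReal.ofReal (f y) * ENNReal.ofReal (μ (y⁻¹ * z))) := ENNReal.tsum_comm
      _ = ∑' y, ∑' g, ENNReal.ofReal (h (y * g)) *
          (ENNReal.ofReal (f y) * ENNReal.ofReal (μ g)) := by
          refine tsum_congr fun y => ?_
          rw [← (Equiv.mulLeft y).tsum_eq]
          simp
      _ = ∑' g, ∑' y, ENNReal.ofReal (h (y * g)) *
          (ENNReal.ofReal (f y) * ENNReal.ofReal (μ g)) := ENNReal.tsum_comm
      _ = _ := by
          refine tsum_congr fun g => ?_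
          rw [← ENNReal.tsum_mul_left]
          refine tsum_congr fun y => ?_
          ring
  calc crossT μ f h + 2 * sqN h = ∑' g, ENNReal.ofReal (μ g) * (sqN f + sqN h) := by
        nth_rw 1 [h1]
        rw [crossT, ← ENNReal.tsum_mul_left, ← ENNReal.tsum_add]
        refine tsum_congr fun g => ?_
        rw [mul_left_comm, ← mul_add]
        congr 1
        have e3 : sqN h = ∑' x, ENNReal.ofReal (h (x * g) ^ 2) := by
          rw [sqN, ← tsum_mul_right_shift g]
        rw [e3, sqN, ← ENNReal.tsum_mul_left, ← ENNReal.tsum_add, ← ENNReal.tsum_add]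
        refine tsum_congr fun x => ?_
        have := hf x
        have := hh (x * g)
        rw [show (2 : ℝ≥0∞) = ENNReal.ofReal 2 by simp, ← ENNReal.ofReal_mul (by positivity),
          ← ENNReal.ofReal_mul (by positivity), ← ENNReal.ofReal_add (by positivity) (by positivity),
          ← ENNReal.ofReal_add (by positivity) (by positivity)]
        congr 1; ring
    _ = _ := by rw [ENNReal.tsum_mul_right, hsum, one_mul]

lemma ofReal_conv (μ : G → ℝ) (hprob : IsProbDensity μ) (f : G → ℝ) (hf : ∀ x, 0 ≤ f x)
    (hs : ∑' x, ENNReal.ofReal (f x) = 1) (g : G) :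
    ENNReal.ofReal (∑' y, f y * μ (y⁻¹ * g)) =
      ∑' y, ENNReal.ofReal (f y) * ENNReal.ofReal (μ (y⁻¹ * g)) := by
  have hsf : Summable f := by
    have := ENNReal.summable_toReal (f := fun x => ENNReal.ofReal (f x)) (by rw [hs]; simp)
    simpa [ENNReal.toReal_ofReal (hf _)] using this
  have hμ1 : ∀ x, μ x ≤ 1 := fun x => le_hasSum hprob.2 x fun j _ => hprob.1 j
  rw [ENNReal.ofReal_tsum_of_nonneg]
  · exact tsum_congr fun y => ENNReal.ofReal_mul (hf y)
  · exact fun y => mul_nonneg (hf y) (hprob.1 _)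
  · exact Summable.of_nonneg_of_le (fun y => mul_nonneg (hf y) (hprob.1 _))
      (fun y => mul_le_of_le_one_right (hf y) (hμ1 _)) hsf

lemma prob_tsum (μ : G → ℝ) (hprob : IsProbDensity μ) : ∑' g, ENNReal.ofReal (μ g) = 1 := by
  rw [← ENNReal.ofReal_tsum_of_nonneg hprob.1 hprob.2.summable, hprob.2.tsum_eq]; simp

lemma conv_swap (a b c : G → ℝ≥0∞) :
    ∑' g, (∑' y, a y * b (y⁻¹ * g)) * c g = ∑' y, a y * ∑' g, b g * c (y * g) := by
  calc _ = ∑' g, ∑' y, a y * b (y⁻¹ * g) * c g := by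
        refine tsum_congr fun g => ?_
        rw [ENNReal.tsum_mul_right]
    _ = ∑' y, ∑' g, a y * b (y⁻¹ * g) * c g := ENNReal.tsum_comm
    _ = _ := by
        refine tsum_congr fun y => ?_
        rw [← (Equiv.mulLeft y).tsum_eq, ← ENNReal.tsum_mul_left]
        simp [mul_assoc]

lemma convPow_prob (μ : G → ℝ) (hprob : IsProbDensity μ) (n : ℕ) :
    (∀ x, 0 ≤ convPow μ n x) ∧ ∑' x, ENNReal.ofReal (convPow μ n x) = 1 := by
  classical
  induction n with
  | zero =>
    constructor
    · intro x; simp only [convPow]; split_ifs <;> norm_num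
    · rw [tsum_eq_single 1]
      · simp [convPow]
      · intro x hx; simp [convPow, hx]
  | succ n ih =>
    constructor
    · intro x
      exact tsum_nonneg fun y => mul_nonneg (ih.1 y) (hprob.1 _)
    · simp only [convPow]
      simp only [ofReal_conv μ hprob _ ih.1 ih.2]
      have := conv_swap (fun x => ENNReal.ofReal (convPow μ n x)) (fun x => ENNReal.ofReal (μ x))
        (fun _ => 1)
      simp only [mul_one, prob_tsum μ hprob, ih.2] at this
      exact this

lemma convPow_exp (μ : G → ℝ) (hprob : IsProbDensity μ) (E : G → ℝ≥0∞) (h1 : E 1 = 1)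
    (hE : ∀ x y, E (x * y) ≤ E x * E y) (n : ℕ) :
    ∑' x, ENNReal.ofReal (convPow μ n x) * E x ≤ (∑' x, ENNReal.ofReal (μ x) * E x) ^ n := by
  classical
  induction n with
  | zero =>
    rw [tsum_eq_single 1]
    · simp [convPow, h1]
    · intro x hx; simp [convPow, hx]
  | succ n ih =>
    obtain ⟨i1, i2⟩ := convPow_prob μ hprob n
    simp only [convPow]
    simp only [ofReal_conv μ hprob _ i1 i2]
    rw [conv_swap (fun x => ENNReal.ofReal (convPow μ n x)) (fun x => ENNReal.ofReal (μ x)) E]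
    calc _ ≤ ∑' y, ENNReal.ofReal (convPow μ n y) * ∑' g, ENNReal.ofReal (μ g) * (E y * E g) := by
          gcongr with y g
          exact hE y g
      _ = ∑' y, (ENNReal.ofReal (convPow μ n y) * E y) * ∑' g, ENNReal.ofReal (μ g) * E g := by
          refine tsum_congr fun y => ?_
          rw [mul_assoc, ← ENNReal.tsum_mul_left (a := E y)]
          congr 1
          refine tsum_congr fun g => ?_
          ring
      _ ≤ _ := by
          rw [ENNReal.tsum_mul_right, pow_succ]
          gcongr

lemma final_real (a r M lam L : ℝ) (n : ℕ) (α β : ℝ) (hα : 0 < α) (hβ : 0 ≤ β) (ha : 0 ≤ a)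
    (hr : r = Real.exp (-(2 * α))) (hM : M = Real.exp β)
    (h1 : a ^ 2 ≤ r ^ n) (h2 : a * Real.exp (lam * L) ≤ M ^ n) :
    a ≤ Real.exp (-(α / 2)) ^ n * Real.exp (-(lam * (α / (2 * (α + β)))) * L) := by
  rcases ha.eq_or_lt with h0 | h0
  · rw [← h0]; positivity
  obtain ⟨t, rfl⟩ : ∃ t, a = Real.exp t := ⟨Real.log a, (Real.exp_log h0).symm⟩
  rw [hr, ← Real.exp_nat_mul, ← Real.exp_nat_mul, Real.exp_le_exp] at h1
  rw [hM, ← Real.exp_nat_mul, ← Real.exp_add, Real.exp_le_exp] at h2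
  rw [← Real.exp_nat_mul, ← Real.exp_add, Real.exp_le_exp]
  push_cast at h1
  set θ := α / (2 * (α + β)) with hθ
  have hθ1 : θ * (2 * (α + β)) = α := by rw [hθ]; field_simp
  have hθ0 : 0 ≤ θ := by positivity
  have hθ2 : θ ≤ 1 := by rw [hθ, div_le_one (by positivity)]; linarith
  have k1 : (1 - θ) * t ≤ (1 - θ) * (-(n * α)) := mul_le_mul_of_nonneg_left (by linarith) (by linarith)
  have k2 : θ * t ≤ θ * (n * β - lam * L) := mul_le_mul_of_nonneg_left (by linarith) hθ0
  have k3 : θ * (n * α) + θ * (n * β) = n * (α / 2) := by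
    linear_combination (n : ℝ) / 2 * hθ1
  linarith

end Walk
/-- **Lemma 3.6.**  On a non-elementary hyperbolic group, a symmetric probability measure
(whose support generates the group) with a finite exponential moment satisfies the
exponential decay estimate (ED): `G(e,γ) ≤ C₁ exp(-c₁ d_w(e,γ))`. -/
theorem green_function_exponential_decay
    {G : Type*} [Group G] (hG : NonElemHyperbolic G)
    (S : Finset G) (hS : Generates S)
    (μ : G → ℝ) (hprob : IsProbDensity μ) (hsymm : IsSymmetric μ) (hgen : GeneratesSupp μ)
    (hexp : HasExpMoment (wordDist S) μ) :
    ∃ C₁ c₁ : ℝ, 0 < C₁ ∧ 0 < c₁ ∧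
      ∀ γ : G, greenFn μ 1 γ ≤ C₁ * Real.exp (-c₁ * wordDist S 1 γ) := by
  classical
  have : Infinite G := hG.1
  obtain ⟨hh, hq⟩ := hG.2.2 S hS
  obtain ⟨C0, hC0⟩ := poincare hS hh hq μ hprob.1 hgen
  obtain ⟨lam, hlam, hsumm⟩ := hexp
  simp only [wd_one] at hsumm ⊢
  set E : G → ℝ≥0∞ := fun x => ENNReal.ofReal (Real.exp (lam * wordLength S x)) with hE
  have hE1 : E 1 = 1 := by simp [hE, wl_one]
  have hEm : ∀ x y, E (x * y) ≤ E x * E y := by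
    intro x y
    rw [hE]
    simp only
    rw [← ENNReal.ofReal_mul (by positivity), ← Real.exp_add, ← mul_add]
    apply ENNReal.ofReal_le_ofReal
    rw [Real.exp_le_exp]
    have := wl_mul hS x y
    have h' : (wordLength S (x * y) : ℝ) ≤ wordLength S x + wordLength S y := by exact_mod_cast this
    exact mul_le_mul_of_nonneg_left h' hlam.le
  set M0 : ℝ := ∑' g, Real.exp (lam * wordLength S g) * μ g with hM0
  have hM0E : ∑' x, ENNReal.ofReal (μ x) * E x = ENNReal.ofReal M0 := by
    rw [hM0, ENNReal.ofReal_tsum_of_nonneg (fun g => mul_nonneg (Real.exp_pos _).le (hprob.1 g)) hsumm]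
    refine tsum_congr fun g => ?_
    rw [ENNReal.ofReal_mul (by positivity), mul_comm]
  have hW : ∀ n, ∑' x, ENNReal.ofReal (convPow μ n x) * E x ≤ ENNReal.ofReal M0 ^ n := by
    intro n
    rw [← hM0E]
    exact convPow_exp μ hprob E hE1 hEm n
  have hP := convPow_prob μ hprob
  have hle1 : ∀ n x, convPow μ n x ≤ 1 := by
    intro n x
    have := ENNReal.le_tsum (f := fun x => ENNReal.ofReal (convPow μ n x)) x
    rw [(hP n).2] at this
    simpa using this
  have hsq : ∀ n x, ENNReal.ofReal (convPow μ n x ^ 2) ≤ ENNReal.ofReal (convPow μ n x) := by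
    intro n x
    apply ENNReal.ofReal_le_ofReal
    nlinarith [hle1 n x, (hP n).1 x]
  have hN : ∀ n, sqN (convPow μ n) ≠ ⊤ := by
    intro n
    refine ne_top_of_le_ne_top (b := 1) (by simp) ?_
    rw [← (hP n).2]
    exact ENNReal.tsum_le_tsum (hsq n)
  have hMo : ∀ n, sqM S (convPow μ n) ≠ ⊤ := by
    intro n
    refine ne_top_of_le_ne_top (b := ENNReal.ofReal lam⁻¹ * ENNReal.ofReal M0 ^ n)
      (ENNReal.mul_ne_top (by simp) (by simp)) ?_
    refine le_trans ?_ (mul_le_mul_right (hW n) _)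
    rw [← ENNReal.tsum_mul_left]
    refine ENNReal.tsum_le_tsum fun x => ?_
    rw [mul_left_comm]
    refine mul_le_mul' (hsq n x) ?_
    rw [hE]
    simp only
    rw [← ENNReal.ofReal_mul (by positivity), ← ENNReal.ofReal_natCast]
    apply ENNReal.ofReal_le_ofReal
    rw [inv_mul_eq_div, le_div_iff₀ hlam]
    have := Real.add_one_le_exp (lam * wordLength S x)
    linarith
  set D : ℝ := 2 * (C0 : ℝ) + 1 with hD
  have hDpos : 0 < D := by positivity
  have hstep : ∀ n, sqN (convPow μ (n + 1)) ≤ ENNReal.ofReal (D / (D + 1)) * sqN (convPow μ n) := by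
    intro n
    have c1 := cross_bound μ hsymm C0 hC0 _ _ (hN n) (hN (n + 1)) (hMo n) (hMo (n + 1))
    have c2 := cross_eq μ hprob.1 (prob_tsum μ hprob) _ _ (hP n).1 (hP (n + 1)).1
      (fun g => ofReal_conv μ hprob _ (hP n).1 (hP n).2 g)
    set T := crossT μ (convPow μ n) (convPow μ (n + 1))
    set a := sqN (convPow μ n)
    set b := sqN (convPow μ (n + 1))
    have ha : a ≠ ⊤ := hN n
    have hb : b ≠ ⊤ := hN (n + 1)
    have hT : T ≠ ⊤ := by
      intro hT
      rw [hT, top_add] at c2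
      exact ENNReal.add_ne_top.2 ⟨ha, hb⟩ c2.symm
    have d1 := ENNReal.toReal_mono (ENNReal.mul_ne_top (by finiteness) hT) c1
    have d2 := congrArg ENNReal.toReal c2
    rw [ENNReal.toReal_add ha hb, ENNReal.toReal_mul, ENNReal.toReal_mul] at d1
    rw [ENNReal.toReal_add ha hb, ENNReal.toReal_add hT (ENNReal.mul_ne_top (by simp) hb),
      ENNReal.toReal_mul] at d2
    simp only [ENNReal.toReal_ofNat, ENNReal.coe_toReal] at d1 d2
    rw [← ENNReal.ofReal_toReal ha, ← ENNReal.ofReal_toReal hb, ← ENNReal.ofReal_mul (by positivity)]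
    apply ENNReal.ofReal_le_ofReal
    rw [div_mul_eq_mul_div, le_div_iff₀ (by positivity)]
    have t1 : T.toReal = a.toReal - b.toReal := by linarith
    have t2 : 0 ≤ T.toReal := ENNReal.toReal_nonneg
    have t3 : 0 ≤ a.toReal := ENNReal.toReal_nonneg
    rw [t1] at d1 t2
    rw [hD]
    nlinarith
  set r : ℝ := D / (D + 1) with hr
  have hr0 : 0 < r := by positivity
  have hr1 : r < 1 := by rw [hr, div_lt_one (by positivity)]; linarith
  have hNr : ∀ n, sqN (convPow μ n) ≤ ENNReal.ofReal r ^ n := by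
    intro n
    induction n with
    | zero =>
      rw [pow_zero, ← (hP 0).2]
      exact ENNReal.tsum_le_tsum (hsq 0)
    | succ n ih =>
      refine (hstep n).trans ?_
      rw [pow_succ']
      gcongr
  have ha2 : ∀ n x, convPow μ n x ^ 2 ≤ r ^ n := by
    intro n x
    have := (ENNReal.le_tsum (f := fun x => ENNReal.ofReal (convPow μ n x ^ 2)) x).trans (hNr n)
    rw [← ENNReal.ofReal_pow hr0.le] at this
    exact (ENNReal.ofReal_le_ofReal_iff (by positivity)).1 this
  set M : ℝ := max M0 1 with hM
  have hM1 : 1 ≤ M := le_max_right _ _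
  have haM : ∀ n x, convPow μ n x * Real.exp (lam * wordLength S x) ≤ M ^ n := by
    intro n x
    have := (ENNReal.le_tsum (f := fun x => ENNReal.ofReal (convPow μ n x) * E x) x).trans (hW n)
    have h2 : ENNReal.ofReal M0 ^ n ≤ ENNReal.ofReal M ^ n := by
      gcongr; exact le_max_left _ _
    have := this.trans h2
    rw [← ENNReal.ofReal_pow (by linarith), hE] at this
    simp only at this
    rw [← ENNReal.ofReal_mul ((hP n).1 x)] at this
    exact (ENNReal.ofReal_le_ofReal_iff (by positivity)).1 this
  set α := -(Real.log r) / 2 with hα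
  have hα0 : 0 < α := by
    have := Real.log_neg hr0 hr1
    rw [hα]; linarith
  set β := Real.log M with hβ
  have hβ0 : 0 ≤ β := Real.log_nonneg hM1
  have hrα : r = Real.exp (-(2 * α)) := by
    rw [hα, show -(2 * (-(Real.log r) / 2)) = Real.log r by ring, Real.exp_log hr0]
  have hMβ : M = Real.exp β := by rw [hβ, Real.exp_log (by linarith)]
  set q := Real.exp (-(α / 2)) with hq'
  have hq0 : 0 ≤ q := (Real.exp_pos _).le
  have hq1 : q < 1 := by rw [hq', Real.exp_lt_one_iff]; linarith
  refine ⟨(1 - q)⁻¹, lam * (α / (2 * (α + β))), inv_pos.2 (by linarith), by positivity, fun γ => ?_⟩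
  have hbd : ∀ n, convPow μ n γ ≤
      q ^ n * Real.exp (-(lam * (α / (2 * (α + β)))) * wordLength S γ) := fun n =>
    final_real _ r M lam _ n α β hα0 hβ0 ((hP n).1 γ) hrα hMβ (ha2 n γ) (haM n γ)
  have hg : HasSum (fun n : ℕ => q ^ n * Real.exp (-(lam * (α / (2 * (α + β)))) * wordLength S γ))
      ((1 - q)⁻¹ * Real.exp (-(lam * (α / (2 * (α + β)))) * wordLength S γ)) :=
    (hasSum_geometric_of_lt_one hq0 hq1).mul_right _
  rw [greenFn, inv_one, one_mul, ← hg.tsum_eq]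
  exact Summable.tsum_le_tsum hbd
    (Summable.of_nonneg_of_le (fun n => (hP n).1 γ) hbd hg.summable) hg.summable

end GHM
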